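/- Identification of the η-divergence with the quantum chi-square divergence: For density operators ρ and σ on a finite-dimensional Hilbert space with σ invertible, the second derivative of the quantum relative entropy along the mixture segment equals the explicit η-divergence: (∂²/∂α²) D(αρ + (1−α)σ || σ)|_{α=0} = η(ρ||σ), where, for a spectral decomposition σ = Σ_i λ_i Π_i with distinct eigenvalues λ_i and orthogonal eigenprojectors Π_i, η(ρ||σ) = Σ_{i≠j} ((log λ_i − log λ_j)/(λ_i − λ_j)) Tr[(ρ−σ)Π_i(ρ−σ)Π_j] + Σ_i (1/λ_i) Tr[(ρ−σ)Π_i(ρ−σ)Π_i]. Equivalently, D(αρ + (1−α)σ || σ) = (1/2)α² η(ρ||σ) + O(α³) as α → 0. -/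

import Mathlib

open Matrix Filter
open scoped Kronecker Classical ComplexOrder

noncomputable section

namespace CovertPaper



variable {ι : Type*} [Fintype ι] [DecidableEq ι]

/-- `ρ` is a density matrix (state). -/
def IsDensity (ρ : Matrix ι ι ℂ) : Prop := ρ.PosSemidef ∧ ρ.trace = 1

/-- `supp ρ ⊆ supp σ`, expressed (for Hermitian PSD matrices) as `ker σ ⊆ ker ρ`. -/
def SuppLE (ρ σ : Matrix ι ι ℂ) : Prop :=
  ∀ v : ι → ℂ, σ.mulVec v = 0 → ρ.mulVec v = 0

/-- Functional calculus on Hermitian matrices (junk value `0` otherwise). -/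
def matFun (f : ℝ → ℝ) (A : Matrix ι ι ℂ) : Matrix ι ι ℂ :=
  if hA : A.IsHermitian then
    (hA.eigenvectorUnitary : Matrix ι ι ℂ) *
      diagonal (fun i => (f (hA.eigenvalues i) : ℂ)) *
      (star (hA.eigenvectorUnitary : Matrix ι ι ℂ))
  else 0

/-- Matrix logarithm of a Hermitian matrix (`0` on the kernel, by `Real.log 0 = 0`). -/
def matLog (A : Matrix ι ι ℂ) : Matrix ι ι ℂ := matFun Real.log A

/-- Trace norm `‖A‖₁ = Tr √(AᴴA)`. -/
def traceNorm (A : Matrix ι ι ℂ) : ℝ := ((matFun Real.sqrt (Aᴴ * A)).trace).re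

/-- Fidelity `F(ρ,σ) = ‖√ρ√σ‖₁²`. -/
def fidelity (ρ σ : Matrix ι ι ℂ) : ℝ :=
  (traceNorm (matFun Real.sqrt ρ * matFun Real.sqrt σ)) ^ 2

/-- von Neumann entropy `H(ρ) = −Tr[ρ log ρ]` (natural logarithm). -/
def vnEnt (ρ : Matrix ι ι ℂ) : ℝ := -((ρ * matLog ρ).trace).re

/-- Quantum (Umegaki) relative entropy `D(ρ‖σ) = Tr[ρ (log ρ − log σ)]`; this real-valued
formula agrees with the usual definition whenever `supp ρ ⊆ supp σ`. -/
def relEnt (ρ σ : Matrix ι ι ℂ) : ℝ := ((ρ * (matLog ρ - matLog σ)).trace).re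

/-- The quantum chi-square divergence
`χ²(ρ‖σ) = (∂²/∂α²) D(αρ + (1−α)σ ‖ σ) |_{α=0}`. -/
def chiSq (ρ σ : Matrix ι ι ℂ) : ℝ :=
  iteratedDeriv 2 (fun α : ℝ => relEnt ((α : ℂ) • ρ + ((1 - α : ℝ) : ℂ) • σ) σ) 0

section PTrace

variable {α β : Type*} [Fintype α] [Fintype β]

/-- Partial trace over the second (right) tensor factor. -/
def ptraceRight (ρ : Matrix (α × β) (α × β) ℂ) : Matrix α α ℂ :=
  of fun a a' => ∑ b, ρ (a, b) (a', b)

/-- Partial trace over the first (left) tensor factor. -/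
def ptraceLeft (ρ : Matrix (α × β) (α × β) ℂ) : Matrix β β ℂ :=
  of fun b b' => ∑ a, ρ (a, b) (a, b')

/-- The product state `⊗_{i=1}^n ω_{x_i}` associated with a classical string `x^n`. -/
def stringState {d : ℕ} (ω : Fin d → Matrix β β ℂ) {n : ℕ} (x : Fin n → Fin d) :
    Matrix (Fin n → β) (Fin n → β) ℂ :=
  of fun a b => ∏ i, ω (x i) (a i) (b i)

/-- The `n`-fold tensor power `ω^{⊗n}`. -/
def tpow (ω : Matrix β β ℂ) (n : ℕ) : Matrix (Fin n → β) (Fin n → β) ℂ :=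
  of fun a b => ∏ i, ω (a i) (b i)

end PTrace

/-- Asymptotic little-o : `f ∈ o(g)` iff `f/g → 0`. -/
def LittleO (f g : ℕ → ℝ) : Prop :=
  Tendsto (fun n => f n / g n) atTop (nhds 0)

/-- Asymptotic little-omega : `f ∈ ω(g)` iff `|f/g| → ∞`. -/
def LittleOmega (f g : ℕ → ℝ) : Prop :=
  Tendsto (fun n => |f n / g n|) atTop atTop

section CQ

variable {B W : Type*} [Fintype B] [DecidableEq B] [Fintype W] [DecidableEq W]

/-- Bob's reduced output `σ_x` of the classical-quantum channel `π`. -/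
def bobOut (π : Fin 2 → Matrix (B × W) (B × W) ℂ) (x : Fin 2) : Matrix B B ℂ :=
  ptraceRight (π x)

/-- Willie's reduced output `ω_x` of the classical-quantum channel `π`. -/
def willieOut (π : Fin 2 → Matrix (B × W) (B × W) ℂ) (x : Fin 2) : Matrix W W ℂ :=
  ptraceLeft (π x)

variable (π : Fin 2 → Matrix (B × W) (B × W) ℂ)

/-- Bob's output state for the codeword `x^n`. -/
def bobWord {n : ℕ} (x : Fin n → Fin 2) : Matrix (Fin n → B) (Fin n → B) ℂ :=
  stringState (bobOut π) x

/-- Willie's output state for the codeword `x^n`. -/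
def willieWord {n : ℕ} (x : Fin n → Fin 2) : Matrix (Fin n → W) (Fin n → W) ℂ :=
  stringState (willieOut π) x

/-- `Λ` is a (sub-normalized) decoding POVM for each key value. -/
def IsPOVM {n M L K : ℕ} (Λ : Fin K → Fin M → Fin L → Matrix (Fin n → B) (Fin n → B) ℂ) :
    Prop :=
  (∀ k m ℓ, (Λ k m ℓ).PosSemidef) ∧
    ∀ k, ((1 : Matrix (Fin n → B) (Fin n → B) ℂ) - ∑ m, ∑ ℓ, Λ k m ℓ).PosSemidef

/-- Average decoding error probability of a covert secrecy code. -/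
def avgErr {n M L K : ℕ} (f : Fin M → Fin L → Fin K → Fin n → Fin 2)
    (Λ : Fin K → Fin M → Fin L → Matrix (Fin n → B) (Fin n → B) ℂ) : ℝ :=
  ((M : ℝ) * L * K)⁻¹ *
    ∑ m, ∑ ℓ, ∑ k, (1 - ((Λ k m ℓ * bobWord π (f m ℓ k)).trace).re)

/-- Willie's average output state `ρ̄_{W^n}` (averaged over message, public message and key). -/
def willieAvg {n M L K : ℕ} (f : Fin M → Fin L → Fin K → Fin n → Fin 2) :
    Matrix (Fin n → W) (Fin n → W) ℂ :=
  ((((M : ℝ) * L * K)⁻¹ : ℝ) : ℂ) • ∑ m, ∑ ℓ, ∑ k, willieWord π (f m ℓ k)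

/-- Willie's state `ρ_{W^n}^{(m)}` given the secret message `m` (averaged over `ℓ` and `k`). -/
def willieMsg {n M L K : ℕ} (f : Fin M → Fin L → Fin K → Fin n → Fin 2) (m : Fin M) :
    Matrix (Fin n → W) (Fin n → W) ℂ :=
  ((((L : ℝ) * K)⁻¹ : ℝ) : ℂ) • ∑ ℓ, ∑ k, willieWord π (f m ℓ k)

/-- The covertness criterion `D(ρ̄_{W^n} ‖ ω₀^{⊗n}) ≤ δ_cov`. -/
def Covert {n M L K : ℕ} (f : Fin M → Fin L → Fin K → Fin n → Fin 2) (δcov : ℝ) : Prop :=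
  relEnt (willieAvg π f) (tpow (willieOut π 0) n) ≤ δcov

/-- The secrecy criterion: some state `ρ̆` independent of `m` is `δ_sec`-close on average. -/
def Secret {n M L K : ℕ} (f : Fin M → Fin L → Fin K → Fin n → Fin 2) (δsec : ℝ) : Prop :=
  ∃ ρ' : Matrix (Fin n → W) (Fin n → W) ℂ, IsDensity ρ' ∧
    (M : ℝ)⁻¹ * ∑ m, traceNorm (willieMsg π f m - ρ') ≤ δsec

/-- Existence of an `(|M|,|L|,|K|,n,ε,δ_cov,δ_sec)` covert secrecy code. -/
def CodeExists (n M L K : ℕ) (ε δcov δsec : ℝ) : Prop :=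
  ∃ (f : Fin M → Fin L → Fin K → Fin n → Fin 2)
    (Λ : Fin K → Fin M → Fin L → Matrix (Fin n → B) (Fin n → B) ℂ),
      IsPOVM (B := B) Λ ∧ avgErr π f Λ ≤ ε ∧ Covert π f δcov ∧ Secret π f δsec

end CQ



section Statement13

/-- The explicit η-divergence associated with a spectral decomposition
`σ = Σ_i λ_i Π_i`. -/
def etaDiv {ι : Type*} [Fintype ι] [DecidableEq ι] {s : Type*} [Fintype s]
    (lam : s → ℝ) (P : s → Matrix ι ι ℂ) (ρ σ : Matrix ι ι ℂ) : ℝ :=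
  (∑ i, ∑ j, if i = j then 0 else
    ((Real.log (lam i) - Real.log (lam j)) / (lam i - lam j)) *
      (((ρ - σ) * P i * ((ρ - σ) * P j)).trace).re) +
  ∑ i, (lam i)⁻¹ * (((ρ - σ) * P i * ((ρ - σ) * P i)).trace).re

/-!
Let `σ = ∑ lᵢ Pᵢ`. The scalar identity `f y - f x = f[x, y] (y - x)` lifts to
`f(a) Pᵢ = f(lᵢ) Pᵢ + f[lᵢ, ·](a) (a - σ) Pᵢ`, because `σ Pᵢ = lᵢ Pᵢ`. Applying it once more to
each `f[lᵢ, ·]` and summing over `i` gives the Daleckii–Krein derivative of `f` at `σ` with an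
exact remainder that is quadratic in `a - σ`. The derivative of `t ↦ D(A_t ‖ σ)` is
`Tr[(log A_t - log σ + 1) A_t']`, since under the trace the derivative of `x log x` at `A` in the
direction `h` is `Tr[(log A + 1) h]`. Along `A_t = σ + t (ρ - σ)` the expansion of the logarithm
therefore makes this derivative `Tr[ρ - σ] + t η + O(t²)`, and integrating gives the claim.
-/

section DividedDifference

variable {𝕜 F : Type*} [NontriviallyNormedField 𝕜] [NormedAddCommGroup F] [NormedSpace 𝕜 F]
  {f : 𝕜 → F} {x y : 𝕜}

theorem analyticAt_dslope (hf : AnalyticAt 𝕜 f y) : AnalyticAt 𝕜 (dslope f x) y := by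
  rcases eq_or_ne y x with rfl | hyx
  · obtain ⟨_, hp⟩ := hf
    exact hp.has_fpower_series_dslope_fslope.analyticAt
  · have hslope : AnalyticAt 𝕜 (fun z => (z - x)⁻¹ • (f z - f x)) y :=
      ((analyticAt_id.sub analyticAt_const).inv (sub_ne_zero.mpr hyx)).smul
        (hf.sub analyticAt_const)
    exact hslope.congr (dslope_eventuallyEq_slope_of_ne f hyx).symm

theorem analyticOnNhd_dslope {t : Set 𝕜} (hf : AnalyticOnNhd 𝕜 f t) :
    AnalyticOnNhd 𝕜 (dslope f x) t :=
  fun y hy => analyticAt_dslope (hf y hy)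

end DividedDifference

section FirstOrderExpansion

variable {𝕜 E s : Type*} {p : E → Prop} [RCLike 𝕜] [Ring E] [StarRing E] [TopologicalSpace E]
  [Algebra 𝕜 E] [ContinuousFunctionalCalculus 𝕜 E p] [Fintype s] {f : 𝕜 → 𝕜} {l : s → 𝕜}
  {P : s → E} {a b : E}

theorem cfc_sub_algebraMap {x : 𝕜} (ha : p a)
    (hf : ContinuousOn (dslope f x) (spectrum 𝕜 a)) :
    cfc f a - algebraMap 𝕜 E (f x) = cfc (dslope f x) a * (a - algebraMap 𝕜 E x) :=
  calc cfc f a - algebraMap 𝕜 E (f x) = cfc (fun y => f y - f x) a := by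
        rw [cfc_sub f _ a hf.of_dslope, cfc_const _ a]
    _ = cfc (fun y => dslope f x y * (y - x)) a := by
        simp only [← sub_smul_dslope f x, smul_eq_mul, mul_comm]
    _ = cfc (dslope f x) a * (a - algebraMap 𝕜 E x) := by
        rw [cfc_mul _ _ a, cfc_sub _ _ a, cfc_id' 𝕜 a, cfc_const x a]

theorem cfc_mul_of_mul_eq_smul {x : 𝕜} {q : E} (ha : p a)
    (hf : ContinuousOn (dslope f x) (spectrum 𝕜 a)) (hq : b * q = x • q) :
    cfc f a * q = f x • q + cfc (dslope f x) a * (a - b) * q := by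
  have h := congr($(cfc_sub_algebraMap ha hf) * q)
  simp only [sub_mul, mul_assoc, ← Algebra.smul_def, ← hq] at h ⊢
  rw [← h, add_sub_cancel]

theorem cfc_eq_sum_smul_add (hP : CompleteOrthogonalIdempotents P)
    (hbP : ∀ i, b * P i = l i • P i) (ha : p a)
    (hf : ∀ i, ContinuousOn (dslope f (l i)) (spectrum 𝕜 a)) :
    cfc f a = ∑ i, f (l i) • P i + ∑ i, cfc (dslope f (l i)) a * (a - b) * P i := by
  rw [← Finset.sum_add_distrib]
  calc cfc f a = ∑ i, cfc f a * P i := by rw [← Finset.mul_sum, hP.complete, mul_one]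
    _ = _ := Finset.sum_congr rfl fun i _ => cfc_mul_of_mul_eq_smul ha (hf i) (hbP i)

theorem cfc_eq_sum_smul (hP : CompleteOrthogonalIdempotents P)
    (hbP : ∀ i, b * P i = l i • P i) (hb : p b)
    (hf : ∀ i, ContinuousOn (dslope f (l i)) (spectrum 𝕜 b)) :
    cfc f b = ∑ i, f (l i) • P i := by
  simpa using cfc_eq_sum_smul_add hP hbP hb hf

end FirstOrderExpansion

section DaleckiiKrein

variable {E s : Type*} [CStarAlgebra E] [Fintype s] {f : ℝ → ℝ} {l : s → ℝ} {P : s → E} {a b : E}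

/-- The double operator sum `h ↦ ∑ᵢⱼ f[lᵢ, lⱼ] Pⱼ h Pᵢ` of Daleckii and Krein: the Fréchet
derivative of the functional calculus of `f` at `∑ᵢ lᵢ Pᵢ`. The divided difference `f[x, y]` is
`dslope f x y`, which is `deriv f x` for `x = y`. -/
def daleckiiKrein (f : ℝ → ℝ) (l : s → ℝ) (P : s → E) : E →L[ℝ] E :=
  ∑ i, ∑ j, dslope f (l i) (l j) •
    ((ContinuousLinearMap.mul ℝ E (P j)).comp ((ContinuousLinearMap.mul ℝ E).flip (P i)))

theorem daleckiiKrein_apply (h : E) :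
    daleckiiKrein f l P h = ∑ i, ∑ j, dslope f (l i) (l j) • (P j * h * P i) := by
  simp [daleckiiKrein, mul_assoc]

theorem cfc_sub_cfc_sub_daleckiiKrein (hP : CompleteOrthogonalIdempotents P)
    (hbP : ∀ i, b * P i = l i • P i) (hb : IsSelfAdjoint b) (ha : IsSelfAdjoint a)
    (hfb : AnalyticOnNhd ℝ f (spectrum ℝ b)) (hfa : AnalyticOnNhd ℝ f (spectrum ℝ a)) :
    cfc f a - cfc f b - daleckiiKrein f l P (a - b) =
      ∑ i, ∑ j, cfc (dslope (dslope f (l i)) (l j)) a * (a - b) * P j * (a - b) * P i := by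
  have hexp (i : s) := cfc_eq_sum_smul_add (f := dslope f (l i)) hP hbP ha fun _ =>
    (analyticOnNhd_dslope (analyticOnNhd_dslope hfa)).continuousOn
  rw [cfc_eq_sum_smul_add hP hbP ha fun _ => (analyticOnNhd_dslope hfa).continuousOn,
    cfc_eq_sum_smul hP hbP hb fun _ => (analyticOnNhd_dslope hfb).continuousOn,
    add_sub_cancel_left, daleckiiKrein_apply, sub_eq_iff_eq_add', ← Finset.sum_add_distrib]
  refine Finset.sum_congr rfl fun i _ => ?_
  conv_lhs => rw [hexp i]
  simp only [add_mul, Finset.sum_mul, smul_mul_assoc]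

theorem eventually_spectrum_subset {u : Set ℝ} (hu : IsOpen u) (hbu : spectrum ℝ b ⊆ u) :
    ∀ᶠ a in nhds b, spectrum ℝ a ⊆ u :=
  upperHemicontinuous_iff_forall_isOpen.mp (upperHemicontinuous_spectrum ℝ E) b u hu hbu

theorem continuousWithinAt_cfc {u : Set ℝ} (hb : IsSelfAdjoint b) (hu : IsOpen u)
    (hbu : spectrum ℝ b ⊆ u) (hf : ContinuousOn f u) :
    ContinuousWithinAt (cfc f) {a | IsSelfAdjoint a} b := by
  obtain ⟨K, hK, hbK, hKu⟩ := exists_compact_between (spectrum.isCompact b) hu hbu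
  have haK : ∀ᶠ a in nhdsWithin b {a | IsSelfAdjoint a}, spectrum ℝ a ⊆ K :=
    ((eventually_spectrum_subset isOpen_interior hbK).filter_mono inf_le_left).mono
      fun _ h => h.trans interior_subset
  exact continuousWithinAt_id.cfc hK f hb haK self_mem_nhdsWithin (hf.mono hKu)

theorem isBigO_cfc_sub_cfc_sub_daleckiiKrein (hP : CompleteOrthogonalIdempotents P)
    (hbP : ∀ i, b * P i = l i • P i) (hb : IsSelfAdjoint b)
    (hf : AnalyticOnNhd ℝ f (spectrum ℝ b)) :
    (fun a => cfc f a - cfc f b - daleckiiKrein f l P (a - b))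
      =O[nhdsWithin b {a | IsSelfAdjoint a}] fun a => ‖a - b‖ ^ 2 := by
  set S : Filter E := nhdsWithin b {a | IsSelfAdjoint a}
  have hu : AnalyticOnNhd ℝ f {x | AnalyticAt ℝ f x} := fun _ hx => hx
  have hbdd (i j : s) : cfc (dslope (dslope f (l i)) (l j)) =O[S] fun _ => (1 : ℝ) :=
    (continuousWithinAt_cfc hb (isOpen_analyticAt ℝ f) hf
      (analyticOnNhd_dslope (analyticOnNhd_dslope hu)).continuousOn).tendsto.isBigO_one ℝ
  have hconst (i : s) : (fun _ => P i) =O[S] fun _ => (1 : ℝ) :=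
    Asymptotics.isBigO_const_const _ one_ne_zero _
  have hdiff : (fun a => a - b) =O[S] fun a => ‖a - b‖ := (Asymptotics.isBigO_refl _ _).norm_right
  have hsum : (fun a => ∑ i, ∑ j,
      cfc (dslope (dslope f (l i)) (l j)) a * (a - b) * P j * (a - b) * P i)
      =O[S] fun a => ‖a - b‖ ^ 2 :=
    .fun_sum fun i _ => .fun_sum fun j _ => by
      simpa [pow_two] using ((((hbdd i j).mul hdiff).mul (hconst j)).mul hdiff).mul (hconst i)
  refine hsum.congr' ?_ .rfl
  filter_upwards [self_mem_nhdsWithin,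
    (eventually_spectrum_subset (isOpen_analyticAt ℝ f) hf).filter_mono inf_le_left] with a ha hfa
  exact (cfc_sub_cfc_sub_daleckiiKrein hP hbP hb ha hf hfa).symm

theorem hasFDerivWithinAt_cfc (hP : CompleteOrthogonalIdempotents P)
    (hbP : ∀ i, b * P i = l i • P i) (hb : IsSelfAdjoint b)
    (hf : AnalyticOnNhd ℝ f (spectrum ℝ b)) :
    HasFDerivWithinAt (cfc f) (daleckiiKrein f l P) {a | IsSelfAdjoint a} b := by
  refine .of_isLittleO ((isBigO_cfc_sub_cfc_sub_daleckiiKrein hP hbP hb hf).trans_isLittleO ?_)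
  exact (Asymptotics.isLittleO_pow_sub_sub b one_lt_two).mono inf_le_left

end DaleckiiKrein

section Trace

variable {E G s : Type*} [CStarAlgebra E] [Fintype s] {f : ℝ → ℝ} {l : s → ℝ} {P : s → E} {b : E}

theorem map_daleckiiKrein_of_map_mul_comm [AddCommGroup G] [Module ℝ G]
    (τ : E →ₗ[ℝ] G) (hτ : ∀ x y, τ (x * y) = τ (y * x))
    (hP : CompleteOrthogonalIdempotents P) (hbP : ∀ i, b * P i = l i • P i)
    (hb : IsSelfAdjoint b) (hf : AnalyticOnNhd ℝ f (spectrum ℝ b)) (h : E) :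
    τ (daleckiiKrein f l P h) = τ (cfc (deriv f) b * h) := by
  have hcompress (i j : s) : τ (P j * h * P i) = if i = j then τ (P i * h) else 0 := by
    rw [hτ, ← mul_assoc]
    split_ifs with hij
    · rw [← hij, (hP.idem i).eq]
    · rw [hP.ortho hij, zero_mul, map_zero]
  rw [cfc_eq_sum_smul hP hbP hb fun _ => (analyticOnNhd_dslope hf.deriv).continuousOn,
    daleckiiKrein_apply]
  simp [hcompress, Finset.sum_mul]

theorem hasDerivAt_map_cfc_of_map_mul_comm [NormedAddCommGroup G] [NormedSpace ℝ G]
    (τ : E →L[ℝ] G) (hτ : ∀ x y, τ (x * y) = τ (y * x))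
    {A : ℝ → E} {A' : E} {t : ℝ} (hP : CompleteOrthogonalIdempotents P)
    (hAP : ∀ i, A t * P i = l i • P i) (hA : ∀ᶠ u in nhds t, IsSelfAdjoint (A u))
    (hA' : HasDerivAt A A' t) (hf : AnalyticOnNhd ℝ f (spectrum ℝ (A t))) :
    HasDerivAt (fun u => τ (cfc f (A u))) (τ (cfc (deriv f) (A t) * A')) t := by
  have hcfc : HasDerivAt (fun u => cfc f (A u)) (daleckiiKrein f l P A') t :=
    (hasFDerivWithinAt_cfc hP hAP hA.self_of_nhds hf).comp_hasDerivAt t hA' hA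
  rw [← τ.coe_coe, ← map_daleckiiKrein_of_map_mul_comm τ.toLinearMap hτ hP hAP hA.self_of_nhds hf]
  exact τ.hasFDerivAt.comp_hasDerivAt t hcfc

end Trace

theorem isBigO_pow_succ_of_hasDerivAt {F : Type*} [NormedAddCommGroup F] [NormedSpace ℝ F]
    {g g' : ℝ → F} {x : ℝ} {n : ℕ} (hgx : g x = 0) (hg : ∀ᶠ t in nhds x, HasDerivAt g (g' t) t)
    (hg' : g' =O[nhds x] fun t => (t - x) ^ n) : g =O[nhds x] fun t => (t - x) ^ (n + 1) := by
  obtain ⟨C, hC₀, hC⟩ := hg'.exists_nonneg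
  obtain ⟨r, hr, hball⟩ := Metric.eventually_nhds_iff_ball.mp (hg.and hC.bound)
  refine .of_bound C (Metric.eventually_nhds_iff_ball.mpr ⟨r, hr, fun t ht => ?_⟩)
  have hsub : Metric.closedBall x ‖t - x‖ ⊆ Metric.ball x r :=
    Metric.closedBall_subset_ball (mem_ball_iff_norm.mp ht)
  have hbound : ∀ y ∈ Metric.closedBall x ‖t - x‖, ‖g' y‖ ≤ C * ‖t - x‖ ^ n := fun y hy =>
    (hball y (hsub hy)).2.trans <| by
      rw [norm_pow]
      gcongr
      exact mem_closedBall_iff_norm.mp hy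
  have hmean := (convex_closedBall x ‖t - x‖).norm_image_sub_le_of_norm_hasDerivWithin_le
    (fun y hy => (hball y (hsub hy)).1.hasDerivWithinAt) hbound
    (Metric.mem_closedBall_self (norm_nonneg _)) (mem_closedBall_iff_norm.mpr le_rfl)
  simpa [hgx, pow_succ, mul_assoc] using hmean

theorem iteratedDeriv_two_eq_of_hasDerivAt {𝕜 F : Type*} [NontriviallyNormedField 𝕜]
    [NormedAddCommGroup F] [NormedSpace 𝕜 F] {g g' : 𝕜 → F} {g'' : F} {x : 𝕜}
    (hg : ∀ᶠ t in nhds x, HasDerivAt g (g' t) t) (hg' : HasDerivAt g' g'' x) :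
    iteratedDeriv 2 g x = g'' := by
  rw [iteratedDeriv_succ, iteratedDeriv_one,
    Filter.EventuallyEq.deriv_eq (hg.mono fun _ ht => ht.deriv), hg'.deriv]

section RealTrace

variable {n : Type*} [Fintype n]

/-- The real part of the trace, as a real-linear functional on complex matrices. -/
def reTrace : Matrix n n ℂ →L[ℝ] ℝ :=
  (Complex.reLm ∘ₗ Matrix.traceLinearMap n ℝ ℂ).toContinuousLinearMap

theorem reTrace_apply (A : Matrix n n ℂ) : reTrace A = A.trace.re := rfl

theorem reTrace_mul_comm (A B : Matrix n n ℂ) : reTrace (A * B) = reTrace (B * A) := by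
  rw [reTrace_apply, reTrace_apply, Matrix.trace_mul_comm]

end RealTrace

section MatrixFunctionalCalculus

open scoped Matrix.Norms.L2Operator

variable {A σ : Matrix ι ι ℂ}

theorem matFun_eq_cfc (f : ℝ → ℝ) (A : Matrix ι ι ℂ) : matFun f A = cfc f A := by
  by_cases hA : A.IsHermitian
  · rw [hA.cfc_eq, Matrix.IsHermitian.cfc]
    simp [matFun, hA, Unitary.conjStarAlgAut_apply, Function.comp_def]
  · rw [cfc_apply_of_not_predicate A (show ¬IsSelfAdjoint A from hA)]
    simp [matFun, hA]

theorem exists_completeOrthogonalIdempotents_mul_eq_smul (hA : A.IsHermitian) :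
    ∃ P : ι → Matrix ι ι ℂ, CompleteOrthogonalIdempotents P ∧
      ∀ i, A * P i = hA.eigenvalues i • P i := by
  let U := Unitary.conjStarAlgAut ℂ (Matrix ι ι ℂ) hA.eigenvectorUnitary
  refine ⟨fun i => U (diagonal (Pi.single i 1)),
    ((CompleteOrthogonalIdempotents.single fun _ : ι => ℂ).map (diagonalRingHom ι ℂ)).map
      (RingHomClass.toRingHom U), fun i => ?_⟩
  calc A * U (diagonal (Pi.single i 1))
      = U (diagonal (RCLike.ofReal ∘ hA.eigenvalues)) * U (diagonal (Pi.single i 1)) :=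
        congrArg (· * _) hA.spectral_theorem
    _ = U ((hA.eigenvalues i : ℂ) • diagonal (Pi.single i 1)) := by
        rw [← map_mul, diagonal_mul_diagonal', ← diagonal_smul]
        congr 2
        ext j
        rcases eq_or_ne j i with rfl | hji <;> simp [*]
    _ = hA.eigenvalues i • U (diagonal (Pi.single i 1)) := by rw [map_smul, Complex.coe_smul]

theorem relEnt_eq_reTrace_sub (hA : A.IsHermitian) :
    relEnt A σ = reTrace (cfc (fun x => x * Real.log x) A) - reTrace (A * matLog σ) := by
  have hcont (f : ℝ → ℝ) : ContinuousOn f (spectrum ℝ A) :=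
    A.finite_real_spectrum.continuousOn f
  rw [cfc_mul _ _ A (hcont _) (hcont _), cfc_id' ℝ A hA.isSelfAdjoint, ← map_sub,
    ← mul_sub, ← matFun_eq_cfc]
  rfl

theorem analyticOnNhd_log_spectrum (hA : IsUnit A) : AnalyticOnNhd ℝ Real.log (spectrum ℝ A) :=
  -- `Real.log x = log |x|` is analytic at negative `x` as well.
  fun _ hx => (Real.contDiffAt_log.mpr
    (ne_of_mem_of_not_mem hx (spectrum.zero_notMem ℝ hA))).analyticAt

theorem hasDerivAt_relEnt {A : ℝ → Matrix ι ι ℂ} {A' : Matrix ι ι ℂ} {t : ℝ}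
    (hA : ∀ᶠ u in nhds t, (A u).IsHermitian) (hA' : HasDerivAt A A' t) (hAt : IsUnit (A t)) :
    HasDerivAt (fun u => relEnt (A u) σ)
      (reTrace ((matLog (A t) - matLog σ + 1) * A')) t := by
  obtain ⟨P, hP, hAP⟩ := exists_completeOrthogonalIdempotents_mul_eq_smul hA.self_of_nhds
  have hlog := analyticOnNhd_log_spectrum hAt
  have hderiv : cfc (deriv fun x => x * Real.log x) (A t) = matLog (A t) + 1 := by
    rw [matLog, matFun_eq_cfc, ← map_one (algebraMap ℝ (Matrix ι ι ℂ)),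
      ← cfc_add_const 1 _ (A t) hlog.continuousOn hA.self_of_nhds.isSelfAdjoint]
    exact cfc_congr fun x hx =>
      Real.deriv_mul_log (ne_of_mem_of_not_mem hx (spectrum.zero_notMem ℝ hAt))
  have hent := hasDerivAt_map_cfc_of_map_mul_comm reTrace reTrace_mul_comm hP hAP hA hA'
    (analyticOnNhd_id.mul hlog)
  have hlin := reTrace.hasFDerivAt.comp_hasDerivAt t (hA'.mul_const (matLog σ))
  have hrel := (hent.sub hlin).congr_of_eventuallyEq
    (hA.mono fun u hu => relEnt_eq_reTrace_sub hu)
  rwa [hderiv, reTrace_mul_comm A', ← map_sub, ← sub_mul, add_sub_right_comm] at hrel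

end MatrixFunctionalCalculus

section QuadraticExpansion

open scoped Matrix.Norms.L2Operator

variable {s : Type*} [Fintype s] {lam : s → ℝ} {P : s → Matrix ι ι ℂ} {σ Δ : Matrix ι ι ℂ}

theorem isBigO_matLog_add_smul (hσ : σ.IsHermitian) (hσu : IsUnit σ) (hΔ : Δ.IsHermitian)
    (hP : CompleteOrthogonalIdempotents P) (hσP : ∀ i, σ * P i = lam i • P i) :
    (fun t : ℝ => matLog (σ + t • Δ) - matLog σ - t • daleckiiKrein Real.log lam P Δ)
      =O[nhds 0] fun t : ℝ => t ^ 2 := by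
  have hcurve : Tendsto (fun t : ℝ => σ + t • Δ) (nhds 0)
      (nhdsWithin σ {a | IsSelfAdjoint a}) := by
    refine tendsto_nhdsWithin_iff.mpr ⟨?_, .of_forall fun t => ?_⟩
    · exact (by fun_prop : Continuous fun t : ℝ => σ + t • Δ).tendsto' 0 σ (by simp)
    · exact hσ.isSelfAdjoint.add (.smul (.all t) hΔ)
  have h := (isBigO_cfc_sub_cfc_sub_daleckiiKrein hP hσP hσ.isSelfAdjoint
    (analyticOnNhd_log_spectrum hσu)).comp_tendsto hcurve
  simp only [Function.comp_def, add_sub_cancel_left, map_smul, ← matFun_eq_cfc] at h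
  refine h.trans (.of_bound (‖Δ‖ ^ 2) (.of_forall fun t => ?_))
  rw [norm_pow, norm_norm, norm_smul, norm_pow, mul_pow, mul_comm]

theorem reTrace_daleckiiKrein_log_mul (hinj : Function.Injective lam) (ρ : Matrix ι ι ℂ) :
    reTrace (daleckiiKrein Real.log lam P (ρ - σ) * (ρ - σ)) = etaDiv lam P ρ σ := by
  have htrace (i j : s) : reTrace (P j * (ρ - σ) * P i * (ρ - σ)) =
      ((ρ - σ) * P i * ((ρ - σ) * P j)).trace.re := by
    rw [reTrace_apply, Matrix.mul_assoc, Matrix.mul_assoc, Matrix.trace_mul_comm]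
    simp only [Matrix.mul_assoc]
  have hdd (i j : s) : dslope Real.log (lam i) (lam j) =
      if i = j then (lam i)⁻¹ else
        (Real.log (lam i) - Real.log (lam j)) / (lam i - lam j) := by
    split_ifs with hij
    · rw [hij, dslope_same, Real.deriv_log]
    · rw [dslope_of_ne _ (hinj.ne (Ne.symm hij)), slope_comm, slope_def_field]
  simp only [daleckiiKrein_apply, Finset.sum_mul, smul_mul_assoc, map_sum, map_smul, htrace, hdd,
    smul_eq_mul, etaDiv]
  rw [← Finset.sum_add_distrib]
  refine Finset.sum_congr rfl fun i _ => ?_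
  rw [← Fintype.sum_ite_eq i fun j => (lam i)⁻¹ * ((ρ - σ) * P i * ((ρ - σ) * P j)).trace.re,
    ← Finset.sum_add_distrib]
  refine Finset.sum_congr rfl fun j _ => ?_
  split_ifs <;> simp

theorem eventually_hasDerivAt_relEnt_add_smul (hσ : σ.IsHermitian) (hσu : IsUnit σ)
    (hΔ : Δ.IsHermitian) :
    ∀ᶠ t : ℝ in nhds 0, HasDerivAt (fun u : ℝ => relEnt (σ + u • Δ) σ)
      (reTrace ((matLog (σ + t • Δ) - matLog σ + 1) * Δ)) t := by
  have hcont : Continuous fun t : ℝ => σ + t • Δ := by fun_prop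
  have hunit : ∀ᶠ t : ℝ in nhds 0, IsUnit (σ + t • Δ) :=
    hcont.continuousAt.eventually_mem (Units.isOpen.mem_nhds (by simpa using hσu))
  filter_upwards [hunit] with t ht
  have hA' : HasDerivAt (fun u : ℝ => σ + u • Δ) Δ t := by
    simpa using ((hasDerivAt_id t).smul_const Δ).const_add σ
  exact hasDerivAt_relEnt (.of_forall fun u => hσ.add (.smul hΔ (.all u))) hA' ht

theorem iteratedDeriv_two_relEnt_add_smul (hσ : σ.IsHermitian) (hσu : IsUnit σ)
    (hΔ : Δ.IsHermitian) (hP : CompleteOrthogonalIdempotents P)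
    (hσP : ∀ i, σ * P i = lam i • P i) :
    iteratedDeriv 2 (fun t : ℝ => relEnt (σ + t • Δ) σ) 0 =
      reTrace (daleckiiKrein Real.log lam P Δ * Δ) := by
  refine iteratedDeriv_two_eq_of_hasDerivAt (eventually_hasDerivAt_relEnt_add_smul hσ hσu hΔ) ?_
  have hlog : HasDerivAt (fun t : ℝ => matLog (σ + t • Δ)) (daleckiiKrein Real.log lam P Δ) 0 := by
    rw [hasDerivAt_iff_isLittleO]
    simpa using (isBigO_matLog_add_smul hσ hσu hΔ hP hσP).trans_isLittleO
      (Asymptotics.isLittleO_pow_id one_lt_two)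
  exact reTrace.hasFDerivAt.comp_hasDerivAt 0
    (((hlog.sub_const (matLog σ)).add_const 1).mul_const Δ)

theorem isBigO_relEnt_add_smul (hσ : σ.IsHermitian) (hσu : IsUnit σ) (hΔ : Δ.IsHermitian)
    (hP : CompleteOrthogonalIdempotents P) (hσP : ∀ i, σ * P i = lam i • P i) :
    (fun t : ℝ => relEnt (σ + t • Δ) σ - t * reTrace Δ -
      2⁻¹ * t ^ 2 * reTrace (daleckiiKrein Real.log lam P Δ * Δ))
      =O[nhds 0] fun t : ℝ => t ^ 3 := by
  set η := reTrace (daleckiiKrein Real.log lam P Δ * Δ) with hη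
  have hderiv : ∀ᶠ t : ℝ in nhds 0, HasDerivAt
      (fun t : ℝ => relEnt (σ + t • Δ) σ - t * reTrace Δ - 2⁻¹ * t ^ 2 * η)
      (reTrace ((matLog (σ + t • Δ) - matLog σ + 1) * Δ) - reTrace Δ - t * η) t := by
    filter_upwards [eventually_hasDerivAt_relEnt_add_smul hσ hσu hΔ] with t ht
    refine ((ht.sub ((hasDerivAt_id t).mul_const _)).sub
      (((hasDerivAt_pow 2 t).const_mul 2⁻¹).mul_const η)).congr_deriv ?_
    ring
  let τΔ : Matrix ι ι ℂ →L[ℝ] ℝ := reTrace.comp ((ContinuousLinearMap.mul ℝ _).flip Δ)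
  have hderiv_isBigO : (fun t : ℝ => reTrace ((matLog (σ + t • Δ) - matLog σ + 1) * Δ) -
      reTrace Δ - t * η) =O[nhds 0] fun t : ℝ => t ^ 2 :=
    ((τΔ.isBigO_comp _ _).trans (isBigO_matLog_add_smul hσ hσu hΔ hP hσP)).congr_left
      fun t => by simp [τΔ, hη, sub_mul, add_mul]
  simpa using isBigO_pow_succ_of_hasDerivAt (by simp [relEnt]) hderiv (by simpa using hderiv_isBigO)

end QuadraticExpansion

theorem eta_eq_chi_square_general {s : Type*} [Fintype s] (ρ σ : Matrix ι ι ℂ)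
    (hρ : ρ.IsHermitian) (hσ : σ.PosDef) (lam : s → ℝ) (P : s → Matrix ι ι ℂ)
    (hinj : Function.Injective lam) (hP : CompleteOrthogonalIdempotents P)
    (hspec : σ = ∑ i, (lam i : ℂ) • P i) :
    chiSq ρ σ = etaDiv lam P ρ σ ∧
    Asymptotics.IsBigO (nhds (0 : ℝ))
      (fun α : ℝ => relEnt ((α : ℂ) • ρ + ((1 - α : ℝ) : ℂ) • σ) σ -
        α * (ρ - σ).trace.re - 2⁻¹ * α ^ 2 * etaDiv lam P ρ σ)
      (fun α : ℝ => α ^ 3) := by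
  have hσP (i : s) : σ * P i = lam i • P i := by
    rw [hspec, Finset.sum_mul, ← Complex.coe_smul]
    simp [hP.mul_eq]
  have hseg (α : ℝ) : (α : ℂ) • ρ + ((1 - α : ℝ) : ℂ) • σ = σ + α • (ρ - σ) := by
    rw [Complex.coe_smul, Complex.coe_smul]
    module
  simp only [chiSq, hseg, ← reTrace_daleckiiKrein_log_mul hinj, ← reTrace_apply]
  exact ⟨iteratedDeriv_two_relEnt_add_smul hσ.1 hσ.isUnit (hρ.sub hσ.1) hP hσP,
    isBigO_relEnt_add_smul hσ.1 hσ.isUnit (hρ.sub hσ.1) hP hσP⟩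

/-- **Identification of the η-divergence with the quantum chi-square divergence**:
`(∂²/∂α²) D(αρ+(1−α)σ‖σ)|_{α=0} = η(ρ‖σ)`, and equivalently
`D(αρ+(1−α)σ‖σ) = (1/2)α²η(ρ‖σ) + O(α³)` as `α → 0`. -/
theorem eta_eq_chi_square {ι : Type*} [Fintype ι] [DecidableEq ι]
    {s : Type*} [Fintype s] [DecidableEq s]
    (ρ σ : Matrix ι ι ℂ) (hρ : IsDensity ρ) (hσ : IsDensity σ) (hσpd : σ.PosDef)
    (lam : s → ℝ) (P : s → Matrix ι ι ℂ)
    (hinj : Function.Injective lam)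
    (hherm : ∀ i, (P i).IsHermitian)
    (hproj : ∀ i, P i * P i = P i)
    (horth : ∀ i j, i ≠ j → P i * P j = 0)
    (hres : ∑ i, P i = 1)
    (hspec : σ = ∑ i, ((lam i : ℝ) : ℂ) • P i) :
    chiSq ρ σ = etaDiv lam P ρ σ ∧
    Asymptotics.IsBigO (nhds (0 : ℝ))
      (fun α : ℝ => relEnt ((α : ℂ) • ρ + ((1 - α : ℝ) : ℂ) • σ) σ -
        2⁻¹ * α ^ 2 * etaDiv lam P ρ σ)
      (fun α : ℝ => α ^ 3) := by
  have hP : CompleteOrthogonalIdempotents P :=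
    CompleteOrthogonalIdempotents.iff_ortho_complete.mpr ⟨fun i j h => horth i j h, hres⟩
  simpa [hρ.2, hσ.2] using
    eta_eq_chi_square_general ρ σ hρ.1.isHermitian hσpd lam P hinj hP hspec

end Statement13

end CovertPaper
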